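/- Let F = (ν_j)_{j∈J} be a family of finite (real-valued) signed charges on a semi-ring 𝒮, and suppose there is a finite charge μ on 𝒮 with ν_j ≤ μ for every j ∈ J. Then μ_F, the least upper bound of F, is a finite signed charge on 𝒮 (in particular μ_F(A) ∈ ℝ for all A ∈ 𝒮). -/

import Mathlib

/-! Write `s C = sup_j ν j C`, which is real on `S` because `ν j ≤ μ` there. For a partition `P` of
`A ∈ S`, domination and additivity of `μ` give `∑_{C ∈ P} s C ≤ ∑_{C ∈ P} μ C = μ A`, so `μ_F(A)` is
the least upper bound `supR S s A` of a nonempty set of reals bounded by `μ A` (`isLUB_supR`).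

For additivity, let `A = ⋃ i, A i` be a finite disjoint union within `S`.
* Gluing partitions of the `A i` gives a partition of `A` with the same total (`gluing`), hence
  `∑ μ_F(A i) ≤ μ_F(A)`.
* A partition `P` of `A` is traced on each `A i` (`IsPartition.trace`). Since `s` is subadditive
  (`sup_subadditive`), passing to the traces does not decrease the sum, hence
  `μ_F(A) ≤ ∑ μ_F(A i)`.

In both steps sets of the family may coincide only if they are empty, which is harmless as
`s ∅ = 0`: this is `Finset.sum_image_of_disjoint`. -/

open MeasureTheory Set
open scoped ENNReal NNReal BigOperators

namespace SignedCharges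

variable {Ω : Type*}

/-- `P` is a finite partition of `A` by elements of the family `S`. -/
def IsPartition (S : Set (Set Ω)) (A : Set Ω) (P : Finset (Set Ω)) : Prop :=
  ↑P ⊆ S ∧ (P : Set (Set Ω)).PairwiseDisjoint id ∧ ⋃₀ ↑P = A

/-- The partition-supremum `μ_F` of a family `F = (ν j)` of `EReal`-valued set functions:
`μ_F(A) = sup` over finite partitions `Π` of `A` by elements of `S` of `Σ_{C ∈ Π} sup_j ν j C`. -/
noncomputable def supFun {J : Type*} (S : Set (Set Ω)) (ν : J → Set Ω → EReal)
    (A : Set Ω) : EReal :=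
  ⨆ P : Finset (Set Ω), ⨆ _ : IsPartition S A P, ∑ C ∈ P, ⨆ j, ν j C

/-- The admissibility hypothesis: `sup_j ν j A > -∞` for every `A ∈ S`. -/
def Admissible {J : Type*} (S : Set (Set Ω)) (ν : J → Set Ω → EReal) : Prop :=
  ∀ A ∈ S, ⊥ < ⨆ j, ν j A

/-- An `EReal`-valued signed charge on `S`: vanishes on `∅`, finitely additive on finite
disjoint unions within `S`, and omits at least one of the values `+∞`, `-∞` on `S`. -/
structure IsCharge (S : Set (Set Ω)) (μ : Set Ω → EReal) : Prop where
  empty : μ ∅ = 0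
  additive : ∀ (n : ℕ) (A : Fin n → Set Ω), (∀ i, A i ∈ S) →
    Pairwise (Function.onFun Disjoint A) → (⋃ i, A i) ∈ S → μ (⋃ i, A i) = ∑ i, μ (A i)
  omits : (∀ A ∈ S, μ A ≠ ⊤) ∨ (∀ A ∈ S, μ A ≠ ⊥)

/-- A finite (real-valued) signed charge on `S`. -/
structure IsRealCharge (S : Set (Set Ω)) (μ : Set Ω → ℝ) : Prop where
  empty : μ ∅ = 0
  additive : ∀ (n : ℕ) (A : Fin n → Set Ω), (∀ i, A i ∈ S) →
    Pairwise (Function.onFun Disjoint A) → (⋃ i, A i) ∈ S → μ (⋃ i, A i) = ∑ i, μ (A i)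

/-- Countable additivity for a real-valued set function (unconditional convergence). -/
def CountablyAdditiveR (S : Set (Set Ω)) (μ : Set Ω → ℝ) : Prop :=
  ∀ A : ℕ → Set Ω, (∀ n, A n ∈ S) → Pairwise (Function.onFun Disjoint A) →
    (⋃ n, A n) ∈ S → HasSum (fun n => μ (A n)) (μ (⋃ n, A n))

/-- Countable sub-additivity for an `EReal`-valued set function. -/
def CountablySubadditiveE (S : Set (Set Ω)) (μ : Set Ω → EReal) : Prop :=
  ∀ A : ℕ → Set Ω, (∀ n, A n ∈ S) → Pairwise (Function.onFun Disjoint A) →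
    (⋃ n, A n) ∈ S → μ (⋃ n, A n) ≤ ∑' n, μ (A n)

/-- Countable additivity for an `EReal`-valued set function. -/
def CountablyAdditiveE (S : Set (Set Ω)) (μ : Set Ω → EReal) : Prop :=
  ∀ A : ℕ → Set Ω, (∀ n, A n ∈ S) → Pairwise (Function.onFun Disjoint A) →
    (⋃ n, A n) ∈ S → μ (⋃ n, A n) = ∑' n, μ (A n)

/-- `μ⁺ = μ ∨ 0` : sup over finite partitions of `Σ_{C} max (μ C) 0`. -/
noncomputable def pos (S : Set (Set Ω)) (μ : Set Ω → EReal) (A : Set Ω) : EReal :=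
  ⨆ P : Finset (Set Ω), ⨆ _ : IsPartition S A P, ∑ C ∈ P, max (μ C) 0

/-- `μ⁻ = (-μ) ∨ 0` : sup over finite partitions of `Σ_{C} max (-μ C) 0`. -/
noncomputable def neg (S : Set (Set Ω)) (μ : Set Ω → EReal) (A : Set Ω) : EReal :=
  ⨆ P : Finset (Set Ω), ⨆ _ : IsPartition S A P, ∑ C ∈ P, max (-μ C) 0

/-- The variation `|μ|` : sup over finite partitions of `Σ_{C} |μ C|`. -/
noncomputable def var (S : Set (Set Ω)) (μ : Set Ω → EReal) (A : Set Ω) : EReal :=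
  ⨆ P : Finset (Set Ω), ⨆ _ : IsPartition S A P, ∑ C ∈ P, max (μ C) (-μ C)

/-- The infimum `α ∧ β` of two nonnegative charges:
inf over finite partitions of `Σ_{C} min (α C) (β C)`. -/
noncomputable def infC (S : Set (Set Ω)) (α β : Set Ω → EReal) (A : Set Ω) : EReal :=
  ⨅ P : Finset (Set Ω), ⨅ _ : IsPartition S A P, ∑ C ∈ P, min (α C) (β C)

/-- The ring generated by a semi-ring: finite unions of elements of `S`. -/
def genRing (S : Set (Set Ω)) : Set (Set Ω) :=
  {A | ∃ P : Finset (Set Ω), ↑P ⊆ S ∧ A = ⋃₀ ↑P}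

/-- Coercion of a real-valued set function to an `EReal`-valued one. -/
def toE (μ : Set Ω → ℝ) : Set Ω → EReal := fun A => (μ A : EReal)

/-- `μ` has finite variation on `S`. -/
def FiniteVar (S : Set (Set Ω)) (μ : Set Ω → ℝ) : Prop :=
  ∀ A ∈ S, var S (toE μ) A ≠ ⊤

theorem coe_finset_sum {ι : Type*} (P : Finset ι) (f : ι → ℝ) :
    ((∑ i ∈ P, f i : ℝ) : EReal) = ∑ i ∈ P, (f i : EReal) := by
  classical
  induction P using Finset.induction_on with
  | empty => simp
  | insert a P ha ih => rw [Finset.sum_insert ha, Finset.sum_insert ha, EReal.coe_add, ih]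

theorem IsRealCharge.eq_sum {S : Set (Set Ω)} {μ : Set Ω → ℝ} (hμ : IsRealCharge S μ)
    {A : Set Ω} (hA : A ∈ S) {P : Finset (Set Ω)} (hP : IsPartition S A P) :
    μ A = ∑ C ∈ P, μ C := by
  obtain ⟨hPS, hd, hU⟩ := hP
  let e := P.equivFin.symm
  have hun : (⋃ i, (e i : Set Ω)) = A := by
    rw [← hU, e.surjective.iUnion_comp (fun C : P => (C : Set Ω)), sUnion_eq_iUnion]
    rfl
  have h := hμ.additive P.card (fun i => (e i : Set Ω)) (fun i => hPS (e i).2)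
    (fun i j hij => hd (e i).2 (e j).2 fun h => hij (e.injective (Subtype.ext h)))
    (by rw [hun]; exact hA)
  rw [hun] at h
  rw [h, e.sum_comp (fun C : P => μ C), Finset.sum_coe_sort P μ]

/-- A family of sets that tiles `A`, with repetitions of `∅` allowed, is a partition of `A`. -/
theorem isPartition_image [DecidableEq (Set Ω)] {ι : Type*} {S : Set (Set Ω)} {A : Set Ω}
    {I : Finset ι} {f : ι → Set Ω} (hf : ∀ i ∈ I, f i ∈ S)
    (hd : (I : Set ι).PairwiseDisjoint f) (hU : (⋃ i ∈ I, f i) = A) :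
    IsPartition S A (I.image f) := by
  refine ⟨?_, ?_, ?_⟩
  · intro C hC
    obtain ⟨i, hi, rfl⟩ := Finset.mem_image.1 (Finset.mem_coe.1 hC)
    exact hf i hi
  · intro C hC D hD hCD
    obtain ⟨i, hi, rfl⟩ := Finset.mem_image.1 (Finset.mem_coe.1 hC)
    obtain ⟨j, hj, rfl⟩ := Finset.mem_image.1 (Finset.mem_coe.1 hD)
    exact hd hi hj fun h => hCD (by rw [h])
  · rw [← hU, Finset.coe_image, sUnion_image]
    rfl

theorem IsPartition.trace [DecidableEq (Set Ω)] {S : Set (Set Ω)} (hS : IsSetSemiring S)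
    {A B : Set Ω} {P : Finset (Set Ω)} (hP : IsPartition S A P) (hB : B ∈ S) (hBA : B ⊆ A) :
    IsPartition S B (P.image fun C => C ∩ B) := by
  refine isPartition_image (fun C hC => hS.inter_mem _ (hP.1 hC) _ hB) ?_ ?_
  · intro C hC D hD hCD
    exact (hP.2.1 hC hD hCD).mono inter_subset_left inter_subset_left
  · rw [← iUnion₂_inter, inter_eq_right]
    refine hBA.trans ?_
    rw [← hP.2.2, sUnion_eq_biUnion]
    rfl

theorem isPartition_singleton {S : Set (Set Ω)} {A : Set Ω} (hA : A ∈ S) :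
    IsPartition S A {A} := by
  refine ⟨by simpa using hA, by simp, by simp⟩

/-- Partitions `P i` of the pieces of a disjoint union glue to a partition of the union, and the
sums over the `P i` add up. -/
theorem gluing {n : ℕ} {S : Set (Set Ω)} {s : Set Ω → ℝ} (h0 : s ∅ = 0) {A : Fin n → Set Ω}
    (hd : Pairwise (Function.onFun Disjoint A)) {P : Fin n → Finset (Set Ω)}
    (hP : ∀ i, IsPartition S (A i) (P i)) :
    ∃ Q, IsPartition S (⋃ i, A i) Q ∧ ∑ C ∈ Q, s C = ∑ i, ∑ C ∈ P i, s C := by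
  classical
  let I : Finset (Σ _ : Fin n, Set Ω) := Finset.univ.sigma P
  have hmem : ∀ x ∈ I, x.2 ∈ P x.1 := fun x hx => (Finset.mem_sigma.1 hx).2
  have hdis : (I : Set (Σ _ : Fin n, Set Ω)).PairwiseDisjoint Sigma.snd := by
    rintro ⟨i, C⟩ hx ⟨j, D⟩ hy hxy
    have hC : C ∈ P i := hmem _ hx
    have hD : D ∈ P j := hmem _ hy
    by_cases hij : i = j
    · subst hij
      exact (hP i).2.1 hC hD fun h => hxy (by rw [h])
    · refine (hd hij).mono ?_ ?_
      · rw [← (hP i).2.2]; exact subset_sUnion_of_mem hC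
      · rw [← (hP j).2.2]; exact subset_sUnion_of_mem hD
  refine ⟨I.image Sigma.snd, isPartition_image (fun x hx => (hP _).1 (hmem x hx)) hdis ?_, ?_⟩
  · ext ω
    simp only [← (hP _).2.2, I, mem_iUnion, Finset.mem_sigma, Finset.mem_univ, true_and,
      Sigma.exists, mem_sUnion, Finset.mem_coe, exists_prop]
  · rw [Finset.sum_image_of_disjoint h0 hdis, Finset.sum_sigma]

/-- The real-valued counterpart of `supFun`, for the set function `s = sup_j ν j`; meaningful when
the sums over partitions are bounded above. -/
noncomputable def supR (S : Set (Set Ω)) (s : Set Ω → ℝ) (A : Set Ω) : ℝ :=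
  sSup {x | ∃ P, IsPartition S A P ∧ ∑ C ∈ P, s C = x}

theorem isLUB_supR {S : Set (Set Ω)} {s μ : Set Ω → ℝ} (hμ : IsRealCharge S μ)
    (hs : ∀ C ∈ S, s C ≤ μ C) {A : Set Ω} (hA : A ∈ S) :
    IsLUB {x | ∃ P, IsPartition S A P ∧ ∑ C ∈ P, s C = x} (supR S s A) := by
  refine isLUB_csSup ⟨_, _, isPartition_singleton hA, rfl⟩ ⟨μ A, ?_⟩
  rintro x ⟨P, hP, rfl⟩
  rw [hμ.eq_sum hA hP]
  exact Finset.sum_le_sum fun C hC => hs C (hP.1 hC)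

theorem sup_subadditive {J : Type*} [Nonempty J] {S : Set (Set Ω)} {ν : J → Set Ω → ℝ}
    (hν : ∀ j, IsRealCharge S (ν j)) (hb : ∀ C ∈ S, BddAbove (range fun j => ν j C))
    {n : ℕ} {B : Fin n → Set Ω} (hB : ∀ i, B i ∈ S) (hd : Pairwise (Function.onFun Disjoint B))
    (hU : (⋃ i, B i) ∈ S) :
    ⨆ j, ν j (⋃ i, B i) ≤ ∑ i, ⨆ j, ν j (B i) := by
  refine ciSup_le fun j => ?_
  rw [(hν j).additive n B hB hd hU]
  exact Finset.sum_le_sum fun i _ => le_ciSup (hb _ (hB i)) j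

theorem supR_additive {S : Set (Set Ω)} (hS : IsSetSemiring S) {s μ : Set Ω → ℝ}
    (hμ : IsRealCharge S μ) (hs : ∀ C ∈ S, s C ≤ μ C) (h0 : s ∅ = 0)
    (hsub : ∀ (n : ℕ) (B : Fin n → Set Ω), (∀ i, B i ∈ S) →
      Pairwise (Function.onFun Disjoint B) → (⋃ i, B i) ∈ S → s (⋃ i, B i) ≤ ∑ i, s (B i))
    (n : ℕ) (A : Fin n → Set Ω) (hA : ∀ i, A i ∈ S) (hd : Pairwise (Function.onFun Disjoint A))
    (hU : (⋃ i, A i) ∈ S) :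
    supR S s (⋃ i, A i) = ∑ i, supR S s (A i) := by
  classical
  apply le_antisymm
  · refine (isLUB_supR hμ hs hU).2 ?_
    rintro x ⟨P, hP, rfl⟩
    calc ∑ C ∈ P, s C ≤ ∑ C ∈ P, ∑ i, s (C ∩ A i) := by
          refine Finset.sum_le_sum fun C hC => ?_
          have hCU : (⋃ i, C ∩ A i) = C := by
            rw [← inter_iUnion, inter_eq_left, ← hP.2.2]
            exact subset_sUnion_of_mem hC
          have h := hsub n (fun i => C ∩ A i) (fun i => hS.inter_mem _ (hP.1 hC) _ (hA i))
            (fun i j hij => (hd hij).mono inter_subset_right inter_subset_right)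
            (by rw [hCU]; exact hP.1 hC)
          rwa [hCU] at h
      _ = ∑ i, ∑ C ∈ P, s (C ∩ A i) := Finset.sum_comm
      _ ≤ ∑ i, supR S s (A i) := by
          refine Finset.sum_le_sum fun i _ => (isLUB_supR hμ hs (hA i)).1 ?_
          refine ⟨_, hP.trace hS (hA i) (subset_iUnion A i), ?_⟩
          refine Finset.sum_image_of_disjoint h0 fun C hC D hD hCD => ?_
          exact (hP.2.1 hC hD hCD).mono inter_subset_left inter_subset_left
  · refine le_of_forall_pos_le_add fun ε hε => ?_
    have hn : (0 : ℝ) < n + 1 := by positivity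
    have hδ : 0 < ε / (n + 1) := by positivity
    have hch : ∀ i, ∃ P, IsPartition S (A i) P ∧
        supR S s (A i) - ε / (n + 1) < ∑ C ∈ P, s C := by
      intro i
      obtain ⟨x, ⟨P, hP, rfl⟩, hx, -⟩ :=
        (isLUB_supR hμ hs (hA i)).exists_between (sub_lt_self _ hδ)
      exact ⟨P, hP, hx⟩
    choose P hP hlt using hch
    obtain ⟨Q, hQ, hsum⟩ := gluing h0 hd hP
    have hle : ∑ C ∈ Q, s C ≤ supR S s (⋃ i, A i) := (isLUB_supR hμ hs hU).1 ⟨Q, hQ, rfl⟩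
    have hε' : n * (ε / (n + 1)) ≤ ε := by
      rw [mul_div_assoc', div_le_iff₀ hn]
      nlinarith
    have hall : ∑ i, (supR S s (A i) - ε / (n + 1)) ≤ ∑ i, ∑ C ∈ P i, s C :=
      Finset.sum_le_sum fun i _ => (hlt i).le
    rw [Finset.sum_sub_distrib, Finset.sum_const, Finset.card_univ, Fintype.card_fin,
      nsmul_eq_mul] at hall
    linarith

theorem supFun_eq_supR {J : Type*} [Nonempty J] {S : Set (Set Ω)} {ν : J → Set Ω → ℝ}
    {μ : Set Ω → ℝ} (hμ : IsRealCharge S μ) (hdom : ∀ j, ∀ A ∈ S, ν j A ≤ μ A)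
    {A : Set Ω} (hA : A ∈ S) :
    supFun S (fun j => toE (ν j)) A = (supR S (fun C => ⨆ j, ν j C) A : EReal) := by
  have hb : ∀ C ∈ S, BddAbove (range fun j => ν j C) := fun C hC =>
    ⟨μ C, by rintro _ ⟨j, rfl⟩; exact hdom j C hC⟩
  have hlub := isLUB_supR (s := fun C => ⨆ j, ν j C) hμ (fun C hC => ciSup_le (hdom · C hC)) hA
  have hsup : ∀ C ∈ S, ⨆ j, toE (ν j) C = ((⨆ j, ν j C : ℝ) : EReal) := by
    intro C hC
    refine le_antisymm (iSup_le fun j => EReal.coe_le_coe_iff.2 (le_ciSup (hb C hC) j)) ?_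
    refine EReal.le_of_forall_lt_iff_le.1 fun z hz => ?_
    have hz' : ⨆ j, ν j C ≤ z := ciSup_le fun j => EReal.coe_le_coe_iff.1
      ((le_iSup (fun j => toE (ν j) C) j).trans hz.le)
    exact EReal.coe_le_coe_iff.2 hz'
  have hsum : ∀ P, IsPartition S A P →
      ∑ C ∈ P, ⨆ j, toE (ν j) C = ((∑ C ∈ P, ⨆ j, ν j C : ℝ) : EReal) := by
    intro P hP
    rw [coe_finset_sum]
    exact Finset.sum_congr rfl fun C hC => hsup C (hP.1 hC)
  unfold supFun
  apply le_antisymm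
  · refine iSup₂_le fun P hP => ?_
    rw [hsum P hP]
    exact EReal.coe_le_coe_iff.2 (hlub.1 ⟨P, hP, rfl⟩)
  · refine EReal.le_of_forall_lt_iff_le.1 fun z hz => EReal.coe_le_coe_iff.2 (hlub.2 ?_)
    rintro x ⟨P, hP, rfl⟩
    refine EReal.coe_le_coe_iff.1 (le_trans ?_ hz.le)
    rw [← hsum P hP]
    exact le_iSup₂ (f := fun P (_ : IsPartition S A P) => ∑ C ∈ P, ⨆ j, toE (ν j) C) P hP

/-- the supremum of a family of finite signed charges dominated by a finite
charge is a finite signed charge. -/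
theorem statement2 {Ω J : Type*} [Nonempty J] (S : Set (Set Ω))
    (hS : MeasureTheory.IsSetSemiring S) (ν : J → Set Ω → ℝ)
    (hν : ∀ j, IsRealCharge S (ν j)) (μ : Set Ω → ℝ) (hμ : IsRealCharge S μ)
    (hdom : ∀ j, ∀ A ∈ S, ν j A ≤ μ A) :
    IsCharge S (supFun S fun j => toE (ν j)) ∧
    ∀ A ∈ S, ∃ r : ℝ, supFun S (fun j => toE (ν j)) A = (r : EReal) := by
  have hb : ∀ C ∈ S, BddAbove (range fun j => ν j C) := fun C hC =>
    ⟨μ C, by rintro _ ⟨j, rfl⟩; exact hdom j C hC⟩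
  have hreal := fun {A : Set Ω} (hA : A ∈ S) => supFun_eq_supR hμ hdom hA
  have hadd := supR_additive hS (s := fun C => ⨆ j, ν j C) hμ
    (fun C hC => ciSup_le (hdom · C hC)) (by simp [(hν _).empty])
    (fun n B hB hd hU => sup_subadditive hν hb hB hd hU)
  refine ⟨⟨?_, ?_, Or.inl ?_⟩, fun A hA => ⟨_, hreal hA⟩⟩
  · -- `∅` is the union of the empty family, so this is additivity with no sets.
    have h := hadd 0 Fin.elim0 (fun i => i.elim0) (fun i => i.elim0) (by simpa using hS.empty_mem)
    rw [hreal hS.empty_mem]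
    simpa using h
  · intro n A hA hd hU
    rw [hreal hU, hadd n A hA hd hU, coe_finset_sum]
    exact Finset.sum_congr rfl fun i _ => (hreal (hA i)).symm
  · intro A hA
    rw [hreal hA]
    exact EReal.coe_ne_top _

end SignedCharges
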